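/- Let R be an E-ring and J an E-ideal of R. Then J is E-radical (i.e. J = Erad J) if and only if for all a, b₁, b₂ ∈ R, if b₁·b₂ ∈ J and a ∈ √[E](J ∪ {b₁}) ∩ √[E](J ∪ {b₂}), then a ∈ J. -/

import Mathlib

/-- An E-ideal of an E-ring `(R, E)`: an ideal `I` such that `a ∈ I` implies `E a - 1 ∈ I`. -/
def IsEIdeal {R : Type*} [CommRing R] (E : R → R) (I : Ideal R) : Prop :=
  ∀ a ∈ I, E a - 1 ∈ I

/-- `Erad E X` is the intersection of all prime E-ideals containing `X`
(all of `R` if there are none). -/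
def Erad {R : Type*} [CommRing R] (E : R → R) (X : Set R) : Set R :=
  ⋂ I ∈ {I : Ideal R | I.IsPrime ∧ IsEIdeal E I ∧ X ⊆ ↑I}, (I : Set R)

/-- `eSpan E X` is the smallest E-ideal containing `X` (as a set: the intersection of
all E-ideals containing `X`). -/
def eSpan {R : Type*} [CommRing R] (E : R → R) (X : Set R) : Set R :=
  ⋂ I ∈ {I : Ideal R | IsEIdeal E I ∧ X ⊆ ↑I}, (I : Set R)

/-- The operators `√[n]` on subsets of `R`, defined inductively:
`√[0] X` is the smallest E-ideal containing `X`, and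
`√[n+1] X = √[n] {a | ∃ b₁ b₂, b₁ * b₂ ∈ √[n] X ∧ a ∈ √[n] (X ∪ {b₁}) ∩ √[n] (X ∪ {b₂})}`. -/
def nRad {R : Type*} [CommRing R] (E : R → R) : ℕ → Set R → Set R
  | 0, X => eSpan E X
  | n + 1, X => nRad E n {a | ∃ b₁ b₂ : R, b₁ * b₂ ∈ nRad E n X ∧
      a ∈ nRad E n (X ∪ {b₁}) ∩ nRad E n (X ∪ {b₂})}

/-- `√[E] X = ⋃ n, √[n] X`. -/
def eRad {R : Type*} [CommRing R] (E : R → R) (X : Set R) : Set R :=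
  ⋃ n : ℕ, nRad E n X

/-!
The key fact is that `Erad E X = eRad E X` for every set `X`. Every prime E-ideal containing `X`
contains each `√[n] X`, because a prime containing `b₁ * b₂` contains `b₁` or `b₂`.
Conversely, if `a ∉ √[E] X`, then since `√[E]` commutes with directed unions, Zorn's lemma gives a
`P ⊇ X` maximal with `a ∉ √[E] P`. Adjoining to `P` any element outside it puts `a` in the radical,
and `√[E] P` is closed under case distinctions at products, so `P` is a prime E-ideal.
-/

section Radical

variable {R : Type*} [CommRing R] {E : R → R} {X : Set R} {P : Ideal R} {a b₁ b₂ : R} {n : ℕ}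
  {ι : Sort*} [Nonempty ι] {F : ι → Set R}

theorem isEIdeal_sInf {A : Set (Ideal R)} (hA : ∀ I ∈ A, IsEIdeal E I) : IsEIdeal E (sInf A) := by
  intro x hx
  rw [Submodule.mem_sInf] at hx ⊢
  exact fun I hI ↦ hA I hI x (hx I hI)

theorem isEIdeal_iSup_of_directed {I : ι → Ideal R} (hdir : Directed (· ≤ ·) I)
    (hI : ∀ i, IsEIdeal E (I i)) : IsEIdeal E (⨆ i, I i) := by
  intro x hx
  rw [Submodule.mem_iSup_of_directed I hdir] at hx ⊢
  exact hx.imp fun i hi ↦ hI i x hi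

variable (E X) in
/-- The E-ideal generated by `X`, as an `Ideal`; its underlying set is `eSpan E X`. -/
def eSpanIdeal : Ideal R :=
  sInf {I : Ideal R | IsEIdeal E I ∧ X ⊆ ↑I}

variable (E X) in
theorem coe_eSpanIdeal : (eSpanIdeal E X : Set R) = eSpan E X :=
  Submodule.coe_sInf _

theorem isEIdeal_eSpanIdeal : IsEIdeal E (eSpanIdeal E X) :=
  isEIdeal_sInf fun _ hI ↦ hI.1

theorem subset_eSpan : X ⊆ eSpan E X :=
  Set.subset_iInter₂ fun _ hI ↦ hI.2

theorem eSpan_subset {I : Ideal R} (hI : IsEIdeal E I) (hX : X ⊆ I) : eSpan E X ⊆ I :=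
  Set.biInter_subset_of_mem ⟨hI, hX⟩

theorem eSpanIdeal_mono : Monotone (eSpanIdeal E) :=
  fun _ _ hXY ↦ sInf_le_sInf fun _ hI ↦ ⟨hI.1, hXY.trans hI.2⟩

theorem eSpan_mono : Monotone (eSpan E) := fun X Y hXY ↦ by
  rw [← coe_eSpanIdeal E X, ← coe_eSpanIdeal E Y]
  exact eSpanIdeal_mono hXY

theorem zero_mem_eSpan : (0 : R) ∈ eSpan E X :=
  coe_eSpanIdeal E X ▸ (eSpanIdeal E X).zero_mem

theorem mem_eSpan_of_one_mem (h : (1 : R) ∈ X) (x : R) : x ∈ eSpan E X := by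
  have h_one : (1 : R) ∈ (eSpanIdeal E X : Set R) := coe_eSpanIdeal E X ▸ subset_eSpan h
  rw [← coe_eSpanIdeal]
  exact ((Ideal.eq_top_iff_one _).2 h_one).ge Submodule.mem_top

theorem eSpan_iUnion_subset (hF : Directed (· ⊆ ·) F) :
    eSpan E (⋃ i, F i) ⊆ ⋃ i, eSpan E (F i) := by
  have hdir : Directed (· ≤ ·) fun i ↦ eSpanIdeal E (F i) :=
    hF.mono_comp (g := eSpanIdeal E) _ fun _ _ hXY ↦ eSpanIdeal_mono hXY
  have hcoe : ↑(⨆ i, eSpanIdeal E (F i)) = ⋃ i, eSpan E (F i) := by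
    simp only [Submodule.coe_iSup_of_directed _ hdir, coe_eSpanIdeal]
  rw [← hcoe]
  refine eSpan_subset (isEIdeal_iSup_of_directed hdir fun _ ↦ isEIdeal_eSpanIdeal) ?_
  exact hcoe ▸ Set.iUnion_mono fun _ ↦ subset_eSpan

section PrimeSplit

/-- The elements forced into every `c`-closed prime containing `X` by one case distinction: such a
prime contains `b₁ * b₂`, hence `b₁` or `b₂`, hence `a`. With `c = √[n]` it is the set to which
`√[n]` is applied in the definition of `√[n+1] X`. -/
def primeSplit (c : Set R → Set R) (X : Set R) : Set R :=
  {a | ∃ b₁ b₂ : R, b₁ * b₂ ∈ c X ∧ a ∈ c (X ∪ {b₁}) ∩ c (X ∪ {b₂})}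

variable {c : Set R → Set R}

theorem subset_primeSplit (h_zero : (0 : R) ∈ c X) (hc : ∀ Y, Y ⊆ c Y) : X ⊆ primeSplit c X :=
  fun _ hx ↦ ⟨0, 0, by rwa [mul_zero], hc _ (.inl hx), hc _ (.inl hx)⟩

theorem primeSplit_mono (hc : Monotone c) : Monotone (primeSplit c) := by
  rintro X Y hXY a ⟨b₁, b₂, hb, h₁, h₂⟩
  exact ⟨b₁, b₂, hc hXY hb, hc (Set.union_subset_union_left _ hXY) h₁,
    hc (Set.union_subset_union_left _ hXY) h₂⟩

theorem primeSplit_subset_of_isPrime (hP : P.IsPrime)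
    (hc : ∀ Y : Set R, Y ⊆ P → c Y ⊆ P) (hX : X ⊆ P) : primeSplit c X ⊆ P := by
  rintro a ⟨b₁, b₂, hb, h₁, h₂⟩
  rcases hP.mem_or_mem (hc X hX hb) with hb₁ | hb₂
  · exact hc _ (Set.union_subset hX (Set.singleton_subset_iff.2 hb₁)) h₁
  · exact hc _ (Set.union_subset hX (Set.singleton_subset_iff.2 hb₂)) h₂

theorem primeSplit_iUnion_subset (hmono : Monotone c)
    (hc : ∀ G : ι → Set R, Directed (· ⊆ ·) G → c (⋃ i, G i) ⊆ ⋃ i, c (G i))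
    (hF : Directed (· ⊆ ·) F) : primeSplit c (⋃ i, F i) ⊆ ⋃ i, primeSplit c (F i) := by
  have exists_mem_adjoin {b x : R} (hx : x ∈ c ((⋃ i, F i) ∪ {b})) : ∃ i, x ∈ c (F i ∪ {b}) := by
    rw [Set.iUnion_union] at hx
    have hdir : Directed (· ⊆ ·) fun i ↦ F i ∪ {b} :=
      hF.mono_comp (g := (· ∪ {b})) _ fun _ _ ↦ Set.union_subset_union_left _
    exact Set.mem_iUnion.1 (hc _ hdir hx)
  rintro a ⟨b₁, b₂, hb, h₁, h₂⟩
  obtain ⟨i, hi⟩ := Set.mem_iUnion.1 (hc F hF hb)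
  obtain ⟨j, hj⟩ := exists_mem_adjoin h₁
  obtain ⟨k, hk⟩ := exists_mem_adjoin h₂
  obtain ⟨l, hil, hjl⟩ := hF i j
  obtain ⟨m, hlm, hkm⟩ := hF l k
  exact Set.mem_iUnion.2 ⟨m, b₁, b₂, hmono (hil.trans hlm) hi,
    hmono (Set.union_subset_union_left _ (hjl.trans hlm)) hj,
    hmono (Set.union_subset_union_left _ hkm) hk⟩

end PrimeSplit

theorem nRad_succ : nRad E (n + 1) X = nRad E n (primeSplit (nRad E n) X) :=
  rfl

theorem nRad_mono : Monotone (nRad E n) := by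
  induction n with
  | zero => exact eSpan_mono
  | succ n ih => exact ih.comp (primeSplit_mono ih)

theorem zero_mem_nRad : (0 : R) ∈ nRad E n X := by
  induction n generalizing X with
  | zero => exact zero_mem_eSpan
  | succ n ih => exact ih

theorem subset_nRad : X ⊆ nRad E n X := by
  induction n generalizing X with
  | zero => exact subset_eSpan
  | succ n ih => exact (subset_primeSplit zero_mem_nRad fun _ ↦ ih).trans ih

theorem nRad_level_mono : Monotone fun n ↦ nRad E n X :=
  monotone_nat_of_le_succ fun _ ↦ nRad_mono (subset_primeSplit zero_mem_nRad fun _ ↦ subset_nRad)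

theorem nRad_iUnion_subset (hF : Directed (· ⊆ ·) F) :
    nRad E n (⋃ i, F i) ⊆ ⋃ i, nRad E n (F i) := by
  induction n generalizing F with
  | zero => exact eSpan_iUnion_subset hF
  | succ n ih =>
    have hsplit : primeSplit (nRad E n) (⋃ i, F i) ⊆ ⋃ i, primeSplit (nRad E n) (F i) :=
      primeSplit_iUnion_subset nRad_mono (fun _ ↦ ih) hF
    have hdir : Directed (· ⊆ ·) fun i ↦ primeSplit (nRad E n) (F i) :=
      hF.mono_comp (g := primeSplit (nRad E n)) _ fun _ _ hXY ↦ primeSplit_mono nRad_mono hXY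
    exact (nRad_mono hsplit).trans (ih hdir)

theorem nRad_subset_of_isPrime (hP : P.IsPrime) (hPE : IsEIdeal E P) (hX : X ⊆ P) :
    nRad E n X ⊆ P := by
  induction n generalizing X with
  | zero => exact eSpan_subset hPE hX
  | succ n ih => exact ih (primeSplit_subset_of_isPrime hP (fun _ ↦ ih) hX)

theorem nRad_subset_eRad : nRad E n X ⊆ eRad E X :=
  Set.subset_iUnion (fun n ↦ nRad E n X) n

theorem eSpan_subset_eRad : eSpan E X ⊆ eRad E X :=
  nRad_subset_eRad (n := 0)

theorem subset_eRad : X ⊆ eRad E X :=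
  subset_eSpan.trans eSpan_subset_eRad

theorem eRad_mono : Monotone (eRad E) :=
  fun _ _ hXY ↦ Set.iUnion_mono fun _ ↦ nRad_mono hXY

theorem eRad_iUnion_subset (hF : Directed (· ⊆ ·) F) :
    eRad E (⋃ i, F i) ⊆ ⋃ i, eRad E (F i) :=
  Set.iUnion_subset fun _ ↦ (nRad_iUnion_subset hF).trans <|
    Set.iUnion_mono fun _ ↦ nRad_subset_eRad

theorem primeSplit_eRad_subset : primeSplit (eRad E) X ⊆ eRad E X := by
  rintro a ⟨b₁, b₂, hb, h₁, h₂⟩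
  obtain ⟨k, hk⟩ := Set.mem_iUnion.1 hb
  obtain ⟨l, hl⟩ := Set.mem_iUnion.1 h₁
  obtain ⟨m, hm⟩ := Set.mem_iUnion.1 h₂
  obtain ⟨n, hkn, hln, hmn⟩ := directed_of₃ (· ≤ ·) k l m
  have ha : a ∈ primeSplit (nRad E n) X :=
    ⟨b₁, b₂, nRad_level_mono hkn hk, nRad_level_mono hln hl, nRad_level_mono hmn hm⟩
  have ha_succ : a ∈ nRad E (n + 1) X := by
    rw [nRad_succ]
    exact subset_nRad ha
  exact nRad_subset_eRad ha_succ

theorem eRad_subset_of_isPrime (hP : P.IsPrime) (hPE : IsEIdeal E P) (hX : X ⊆ P) :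
    eRad E X ⊆ P :=
  Set.iUnion_subset fun _ ↦ nRad_subset_of_isPrime hP hPE hX

section MaximalAvoiding

theorem exists_maximal_notMem_eRad (ha : a ∉ eRad E X) :
    ∃ M, X ⊆ M ∧ Maximal (a ∉ eRad E ·) M := by
  refine zorn_subset_nonempty {Y | a ∉ eRad E Y} (fun C hC hchain hne ↦ ?_) X ha
  have : Nonempty C := hne.to_subtype
  refine ⟨⋃₀ C, fun h ↦ ?_, fun _ ↦ Set.subset_sUnion_of_mem⟩
  rw [Set.sUnion_eq_iUnion] at h
  obtain ⟨Y, hY⟩ := Set.mem_iUnion.1 (eRad_iUnion_subset hchain.directedOn.directed_val h)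
  exact hC Y.2 hY

variable {M : Set R}

theorem mem_or_mem_of_maximal (hM : Maximal (a ∉ eRad E ·) M)
    (hb : b₁ * b₂ ∈ eRad E M) : b₁ ∈ M ∨ b₂ ∈ M := by
  have mem_eRad_adjoin {b : R} (hbM : b ∉ M) : a ∈ eRad E (M ∪ {b}) := by
    rw [Set.union_singleton]
    exact not_not.1 fun h ↦ hbM (hM.mem_of_prop_insert h)
  by_contra! h
  exact hM.prop (primeSplit_eRad_subset
    ⟨b₁, b₂, hb, mem_eRad_adjoin h.1, mem_eRad_adjoin h.2⟩)

theorem one_notMem_of_maximal (hM : Maximal (a ∉ eRad E ·) M) : (1 : R) ∉ M := fun h ↦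
  hM.prop (eSpan_subset_eRad (mem_eSpan_of_one_mem h a))

theorem coe_eSpanIdeal_of_maximal (hM : Maximal (a ∉ eRad E ·) M) :
    (eSpanIdeal E M : Set R) = M := by
  rw [coe_eSpanIdeal]
  refine Set.Subset.antisymm (fun x hx ↦ ?_) subset_eSpan
  have hx_mul : x * 1 ∈ eRad E M := by simpa only [mul_one] using eSpan_subset_eRad hx
  exact (mem_or_mem_of_maximal hM hx_mul).resolve_right (one_notMem_of_maximal hM)

theorem isPrime_eSpanIdeal_of_maximal (hM : Maximal (a ∉ eRad E ·) M) :
    (eSpanIdeal E M).IsPrime := by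
  simp only [Ideal.isPrime_iff, Ideal.ne_top_iff_one, ← SetLike.mem_coe,
    coe_eSpanIdeal_of_maximal hM]
  exact ⟨one_notMem_of_maximal hM, fun hxy ↦ mem_or_mem_of_maximal hM (subset_eRad hxy)⟩

end MaximalAvoiding

theorem Erad_eq_eRad : Erad E X = eRad E X := by
  refine Set.Subset.antisymm (fun a ha ↦ ?_)
    (Set.subset_iInter₂ fun P hP ↦ eRad_subset_of_isPrime hP.1 hP.2.1 hP.2.2)
  by_contra h
  obtain ⟨M, hXM, hM⟩ := exists_maximal_notMem_eRad h
  have hcoe : (eSpanIdeal E M : Set R) = M := coe_eSpanIdeal_of_maximal hM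
  have haM : a ∈ (eSpanIdeal E M : Set R) := Set.mem_iInter₂.1 ha _
    ⟨isPrime_eSpanIdeal_of_maximal hM, isEIdeal_eSpanIdeal, hXM.trans hcoe.ge⟩
  exact hM.prop (subset_eRad (hcoe ▸ haM))

end Radical

theorem stmt8_general {R : Type*} [CommRing R] (E : R → R) {S : Set R} (hS : S.Nonempty) :
    S = Erad E S ↔ ∀ a b₁ b₂ : R, b₁ * b₂ ∈ S →
      a ∈ eRad E (S ∪ {b₁}) ∩ eRad E (S ∪ {b₂}) → a ∈ S := by
  rw [Erad_eq_eRad]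
  refine ⟨fun h a b₁ b₂ hb ha ↦ ?_, fun h ↦ subset_eRad.antisymm fun a ha ↦ ?_⟩
  · rw [h]
    exact primeSplit_eRad_subset ⟨b₁, b₂, subset_eRad hb, ha⟩
  · obtain ⟨b, hb⟩ := hS
    have ha_one : a ∈ eRad E (S ∪ {1}) :=
      eSpan_subset_eRad (mem_eSpan_of_one_mem (Set.mem_union_right S (Set.mem_singleton 1)) a)
    exact h a 1 b (by rwa [one_mul]) ⟨ha_one, eRad_mono Set.subset_union_left ha⟩

/-- An E-ideal `J` is E-radical (`J = Erad J`) iff for all `a, b₁, b₂ ∈ R`, whenever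
`b₁ * b₂ ∈ J` and `a ∈ √[E](J ∪ {b₁}) ∩ √[E](J ∪ {b₂})`, we have `a ∈ J`. -/
theorem stmt8 {R : Type*} [CommRing R] (E : R → R)
    (hE0 : E 0 = 1) (hEadd : ∀ x y : R, E (x + y) = E x * E y)
    (J : Ideal R) (hJ : IsEIdeal E J) :
    (J : Set R) = Erad E (J : Set R) ↔
      ∀ a b₁ b₂ : R, b₁ * b₂ ∈ J →
        a ∈ eRad E ((J : Set R) ∪ {b₁}) ∩ eRad E ((J : Set R) ∪ {b₂}) → a ∈ J :=
  stmt8_general E ⟨0, J.zero_mem⟩
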